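/- arXiv:2510.24880 — 6 statements merged into one kernel-verified Lean document; each statement's English description precedes it below -/
import Mathlib

section
/- Let U be a 2×2 complex unitary matrix with det U = 1. Then 3•U + X*U*X + Y*U*Y + Z*U*Z = 4•U + 2•Uᴴ. -/
/-!
The Pauli twirl is depolarizing: `U + XUX + YUY + ZUZ = 2 tr(U) • 1` for every `2×2` matrix `U`,
so the left-hand side equals `2 • U + 2 tr(U) • 1`. For `U` in `SU(2)` the conjugate transpose is
the inverse, hence the adjugate, and every `2×2` matrix satisfies `U + adj U = tr(U) • 1`.
-/

open Matrix

/-- The Pauli-X matrix. -/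
noncomputable def X : Matrix (Fin 2) (Fin 2) ℂ := !![0, 1; 1, 0]
/-- The Pauli-Y matrix. -/
noncomputable def Y : Matrix (Fin 2) (Fin 2) ℂ := !![0, -Complex.I; Complex.I, 0]
/-- The Pauli-Z matrix. -/
noncomputable def Z : Matrix (Fin 2) (Fin 2) ℂ := !![1, 0; 0, -1]

/-- Both `Uᴴ` and `adj U` are inverses of `U`, the latter because `det U = 1`. -/
lemma conjTranspose_eq_adjugate_of_det_eq_one
    (U : Matrix (Fin 2) (Fin 2) ℂ) (hU : U * Uᴴ = 1) (hdet : U.det = 1) :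
    Uᴴ = U.adjugate := by
  have h : U.adjugate * U = 1 := by rw [Matrix.adjugate_mul, hdet, one_smul]
  exact (left_inv_eq_right_inv h hU).symm

/-- For `U = 1` both sides are `4 • 1`; for `U` a Pauli matrix the four terms cancel in pairs. -/
lemma pauli_twirl_eq_trace (U : Matrix (Fin 2) (Fin 2) ℂ) :
    U + X * U * X + Y * U * Y + Z * U * Z = (2 * U.trace) • 1 := by
  rw [Matrix.eta_fin_two U]
  ext i j
  fin_cases i <;> fin_cases j <;>
    simp [X, Y, Z, Matrix.trace_fin_two] <;>
    ring_nf <;> rw [Complex.I_sq] <;> ring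

lemma add_adjugate_fin_two (U : Matrix (Fin 2) (Fin 2) ℂ) :
    U + U.adjugate = U.trace • 1 := by
  ext i j
  fin_cases i <;> fin_cases j <;>
    simp [Matrix.adjugate_fin_two, Matrix.trace_fin_two, add_comm]

/-- For a special unitary 2×2 complex matrix `U`,
`3•U + XUX + YUY + ZUZ = 4•U + 2•Uᴴ`. -/
theorem su2_pauli_twirl_identity
    (U : Matrix (Fin 2) (Fin 2) ℂ)
    (hU : U * Uᴴ = 1) (hdet : U.det = 1) :
    3 • U + X * U * X + Y * U * Y + Z * U * Z = 4 • U + 2 • Uᴴ := by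
  rw [conjTranspose_eq_adjugate_of_det_eq_one U hU hdet]
  calc 3 • U + X * U * X + Y * U * Y + Z * U * Z
      = 2 • U + (U + X * U * X + Y * U * Y + Z * U * Z) := by abel
    _ = 2 • U + 2 • (U + U.adjugate) := by
        rw [pauli_twirl_eq_trace, add_adjugate_fin_two, mul_smul,
          ofNat_smul_eq_nsmul ℂ 2]
    _ = 4 • U + 2 • U.adjugate := by abel
end

section
/- Let U be a 2×2 complex unitary matrix. Then (Tr (Uᴴ*Y*U*Y))^2 + (Tr (Uᴴ*Y*U*X))^2 + (Tr (Uᴴ*X*U*X))^2 + (Tr (Uᴴ*X*U*Y))^2 + (Tr (Uᴴ*Z*U*Y))^2 + (Tr (Uᴴ*Z*U*X))^2 = 8. -/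
/-!
Expanding the trace gives `Tr(MX)² + Tr(MY)² = 4 M₀₁ M₁₀` for every 2×2 matrix `M`, so the sum is
`4 ∑_P (UᴴPU)₀₁ (UᴴPU)₁₀` over `P ∈ {X, Y, Z}`. If `u, v` are the columns of `U`, the Pauli
completeness relation `∑_P P ⊗ P = 2 SWAP - 1` turns `∑_P (uᴴPv)(vᴴPu)` into
`2 (uᴴu)(vᴴv) - (uᴴv)(vᴴu)`. The columns are orthonormal, so this is `2` and the total is `8`.
-/

open Matrix

lemma trace_sq_add_trace_sq (M : Matrix (Fin 2) (Fin 2) ℂ) :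
    (M * Y).trace ^ 2 + (M * X).trace ^ 2 = 4 * (M 0 1 * M 1 0) := by
  simp only [X, Y, Matrix.trace_fin_two, Matrix.mul_apply, Fin.sum_univ_two, Matrix.of_apply,
    Matrix.cons_val', Matrix.cons_val_zero, Matrix.cons_val_one, Matrix.cons_val_fin_one]
  linear_combination (M 0 1 - M 1 0) ^ 2 * Complex.I_sq

/-- The Pauli completeness relation `∑_P P ⊗ P = 2 SWAP - 1`, evaluated on the rows of `V` and the
columns of `U`. -/
lemma sum_pauli_sandwich (V U : Matrix (Fin 2) (Fin 2) ℂ) :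
    (V * Y * U) 0 1 * (V * Y * U) 1 0 + (V * X * U) 0 1 * (V * X * U) 1 0
      + (V * Z * U) 0 1 * (V * Z * U) 1 0
      = 2 * ((V * U) 0 0 * (V * U) 1 1) - (V * U) 0 1 * (V * U) 1 0 := by
  simp only [X, Y, Z, Matrix.mul_apply, Fin.sum_univ_two, Matrix.of_apply,
    Matrix.cons_val', Matrix.cons_val_zero, Matrix.cons_val_one, Matrix.cons_val_fin_one]
  linear_combination (V 0 1 * U 0 1 - V 0 0 * U 1 1) * (V 1 1 * U 0 0 - V 1 0 * U 1 0)
    * Complex.I_sq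

/-- Normalization identity for a unitary 2×2 complex matrix `U`:
`(Tr(U†YUY))² + (Tr(U†YUX))² + (Tr(U†XUX))² + (Tr(U†XUY))² + (Tr(U†ZUY))² + (Tr(U†ZUX))² = 8`. -/
theorem normalization_trace_identity
    (U : Matrix (Fin 2) (Fin 2) ℂ) (hU : U * Uᴴ = 1) :
    (Matrix.trace (Uᴴ * Y * U * Y)) ^ 2 + (Matrix.trace (Uᴴ * Y * U * X)) ^ 2
      + (Matrix.trace (Uᴴ * X * U * X)) ^ 2 + (Matrix.trace (Uᴴ * X * U * Y)) ^ 2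
      + (Matrix.trace (Uᴴ * Z * U * Y)) ^ 2 + (Matrix.trace (Uᴴ * Z * U * X)) ^ 2 = 8 := by
  have hV : Uᴴ * U = 1 := mul_eq_one_comm.mp hU
  have h := sum_pauli_sandwich Uᴴ U
  simp only [hV, Matrix.one_apply_eq, Matrix.one_apply_ne zero_ne_one,
    Matrix.one_apply_ne one_ne_zero] at h
  linear_combination trace_sq_add_trace_sq (Uᴴ * Y * U) + trace_sq_add_trace_sq (Uᴴ * X * U)
    + trace_sq_add_trace_sq (Uᴴ * Z * U) + 4 * h
end

section
/- Let U be a 2×2 complex unitary matrix and define the four 2×2 complex matrices B₀(U) = (1/√3) • 1, B₁(U) = (1/(2√3)) • (Tr(Uᴴ*Y*U*Y) • 1 − (I * Tr(Uᴴ*Y*U*X)) • Z), B₂(U) = (1/(2√3)) • (Tr(Uᴴ*X*U*X) • 1 + (I * Tr(Uᴴ*X*U*Y)) • Z), B₃(U) = (1/(2√3)) • ((I * Tr(Uᴴ*Z*U*Y)) • 1 + Tr(Uᴴ*Z*U*X) • Z). Then ∑_{k=0}^{3} (B_k(U))ᴴ * Z * B_k(U) = Z. -/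
/-! The coefficients `Tr(Uᴴ P U Q)`, for `P`, `Q` Pauli matrices, are real. Every `B U k` is a
combination `a • 1 + b • Z` for which `conj a * b` is purely imaginary, so `(B U k)ᴴ * Z * B U k`
is `(|a|² + |b|²) • Z` (`conj_Z_of_diag`). It remains to sum the squares of the six coefficients
with `Q = X` or `Q = Y`. For fixed `Q`, the matrix `U * Q * Uᴴ` is traceless with square `1`, so
completeness of the Pauli basis (`sum_sq_trace_pauli`) gives
`∑ P, Tr(Uᴴ P U Q)² = 2 Tr 1 = 4` (`sum_sq_coeff`). Hence the total factor of `Z` is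
`1 / 3 + (4 + 4) / 12 = 1`. -/

open Matrix

/-- The four Kraus operators (acting after `U†`) of the output channel of the 3-query
qubit shadow-inversion circuit. -/
noncomputable def B (U : Matrix (Fin 2) (Fin 2) ℂ) : Fin 4 → Matrix (Fin 2) (Fin 2) ℂ :=
  ![(1 / (Real.sqrt 3 : ℂ)) • (1 : Matrix (Fin 2) (Fin 2) ℂ),
    (1 / (2 * (Real.sqrt 3 : ℂ))) •
      ((Matrix.trace (Uᴴ * Y * U * Y)) • (1 : Matrix (Fin 2) (Fin 2) ℂ)
        - (Complex.I * Matrix.trace (Uᴴ * Y * U * X)) • Z),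
    (1 / (2 * (Real.sqrt 3 : ℂ))) •
      ((Matrix.trace (Uᴴ * X * U * X)) • (1 : Matrix (Fin 2) (Fin 2) ℂ)
        + (Complex.I * Matrix.trace (Uᴴ * X * U * Y)) • Z),
    (1 / (2 * (Real.sqrt 3 : ℂ))) •
      ((Complex.I * Matrix.trace (Uᴴ * Z * U * Y)) • (1 : Matrix (Fin 2) (Fin 2) ℂ)
        + (Matrix.trace (Uᴴ * Z * U * X)) • Z)]

/-- Pauli completeness on traceless matrices: the Pauli matrices are orthogonal of squared norm `2`
for the bilinear form `Tr(A * B)`, and they span the traceless matrices. -/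
lemma sum_sq_trace_pauli (A : Matrix (Fin 2) (Fin 2) ℂ) (hA : A.trace = 0) :
    (X * A).trace ^ 2 + (Y * A).trace ^ 2 + (Z * A).trace ^ 2 = 2 * (A * A).trace := by
  simp only [X, Y, Z, Matrix.trace_fin_two, Matrix.mul_apply, Fin.sum_univ_two, Matrix.of_apply,
    Matrix.cons_val', Matrix.cons_val_zero, Matrix.cons_val_one, Matrix.cons_val_fin_one] at hA ⊢
  linear_combination (A 1 0 - A 0 1) ^ 2 * Complex.I_sq - (A 0 0 + A 1 1) * hA

lemma sum_sq_coeff (U Q : Matrix (Fin 2) (Fin 2) ℂ) (hU : U * Uᴴ = 1)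
    (hQ : Q * Q = 1) (hQt : Q.trace = 0) :
    (Uᴴ * X * U * Q).trace ^ 2 + (Uᴴ * Y * U * Q).trace ^ 2 + (Uᴴ * Z * U * Q).trace ^ 2 = 4 := by
  have hU' : Uᴴ * U = 1 := mul_eq_one_comm.mp hU
  have cyc (P : Matrix (Fin 2) (Fin 2) ℂ) :
      (Uᴴ * P * U * Q).trace = (P * (U * Q * Uᴴ)).trace := by
    rw [Matrix.mul_assoc, Matrix.mul_assoc, Matrix.trace_mul_comm]
    simp only [Matrix.mul_assoc]
  have ht : (U * Q * Uᴴ).trace = 0 := by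
    rw [Matrix.trace_mul_comm, ← Matrix.mul_assoc, hU', Matrix.one_mul, hQt]
  have hsq : U * Q * Uᴴ * (U * Q * Uᴴ) = 1 := by
    calc U * Q * Uᴴ * (U * Q * Uᴴ) = U * (Q * (Uᴴ * U) * Q) * Uᴴ := by
          simp only [Matrix.mul_assoc]
      _ = 1 := by rw [hU', Matrix.mul_one, hQ, Matrix.mul_one, hU]
  rw [cyc, cyc, cyc, sum_sq_trace_pauli _ ht, hsq, Matrix.trace_one]
  norm_num

lemma star_coeff (U P Q : Matrix (Fin 2) (Fin 2) ℂ) (hP : Pᴴ = P) (hQ : Qᴴ = Q) :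
    star (Uᴴ * P * U * Q).trace = (Uᴴ * P * U * Q).trace := by
  rw [← Matrix.trace_conjTranspose, Matrix.conjTranspose_mul, Matrix.conjTranspose_mul,
    Matrix.conjTranspose_mul, Matrix.conjTranspose_conjTranspose, hP, hQ, Matrix.trace_mul_comm]
  simp only [Matrix.mul_assoc]

/-- The cross term `star a * b + star b * a` is the coefficient of `1` in
`(a • 1 + b • Z)ᴴ * Z * (a • 1 + b • Z)`, so the product is a multiple of `Z` when it vanishes. -/
lemma conj_Z_of_diag (c a b : ℂ) (h : star a * b + star b * a = 0) :
    (c • (a • (1 : Matrix (Fin 2) (Fin 2) ℂ) + b • Z))ᴴ * Z * (c • (a • 1 + b • Z)) =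
      (star c * c * (star a * a + star b * b)) • Z := by
  have hZ : Zᴴ = Z := by
    ext i j; fin_cases i <;> fin_cases j <;> simp [Z]
  have hZZ : Z * Z = 1 := by
    ext i j; fin_cases i <;> fin_cases j <;> simp [Z]
  calc _ = (star c * c * (star a * a + star b * b)) • Z
        + (star c * c * (star a * b + star b * a)) • (1 : Matrix (Fin 2) (Fin 2) ℂ) := by
        simp only [Matrix.conjTranspose_smul, Matrix.conjTranspose_add, hZ,
          Matrix.conjTranspose_one, Matrix.smul_mul, Matrix.mul_smul, Matrix.add_mul,
          Matrix.mul_add, Matrix.one_mul, Matrix.mul_one, hZZ]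
        module
    _ = _ := by rw [h]; simp

/-- The dual-map condition: the Kraus family `B U` preserves the Pauli-Z observable,
`∑ k, (B k)ᴴ * Z * (B k) = Z`. -/
theorem kraus_dual_fixes_Z (U : Matrix (Fin 2) (Fin 2) ℂ) (hU : U * Uᴴ = 1) :
    ∑ k : Fin 4, (B U k)ᴴ * Z * (B U k) = Z := by
  have hX : Xᴴ = X := by
    ext i j; fin_cases i <;> fin_cases j <;> simp [X]
  have hY : Yᴴ = Y := by
    ext i j; fin_cases i <;> fin_cases j <;> simp [Y]
  have hZ : Zᴴ = Z := by
    ext i j; fin_cases i <;> fin_cases j <;> simp [Z]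
  have sX := sum_sq_coeff U X hU (by ext i j; fin_cases i <;> fin_cases j <;> simp [X])
    (by simp [X])
  have sY := sum_sq_coeff U Y hU (by ext i j; fin_cases i <;> fin_cases j <;> simp [Y])
    (by simp [Y])
  have rXX := star_coeff U X X hX hX
  have rXY := star_coeff U X Y hX hY
  have rYX := star_coeff U Y X hY hX
  have rYY := star_coeff U Y Y hY hY
  have rZX := star_coeff U Z X hZ hX
  have rZY := star_coeff U Z Y hZ hY
  have hI : star Complex.I = -Complex.I := Complex.conj_I
  have h3 : (1 / (Real.sqrt 3 : ℂ)) ^ 2 = 1 / 3 := by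
    rw [div_pow, ← Complex.ofReal_pow, Real.sq_sqrt (by norm_num)]
    norm_num
  have hs : star (1 / (Real.sqrt 3 : ℂ)) = 1 / (Real.sqrt 3 : ℂ) := by
    simp
  have hhalf : 1 / (2 * (Real.sqrt 3 : ℂ)) = 1 / 2 * (1 / (Real.sqrt 3 : ℂ)) := by
    rw [one_div_mul_one_div]
  have hs' : star (1 / 2 * (1 / (Real.sqrt 3 : ℂ))) = 1 / 2 * (1 / (Real.sqrt 3 : ℂ)) := by
    simp
  simp only [B, Fin.sum_univ_four, Matrix.cons_val]
  rw [hhalf]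
  generalize (1 / (Real.sqrt 3 : ℂ)) = s at *
  generalize (Uᴴ * X * U * X).trace = xx at *
  generalize (Uᴴ * X * U * Y).trace = xy at *
  generalize (Uᴴ * Y * U * X).trace = yx at *
  generalize (Uᴴ * Y * U * Y).trace = yy at *
  generalize (Uᴴ * Z * U * X).trace = zx at *
  generalize (Uᴴ * Z * U * Y).trace = zy at *
  have e0 : s • (1 : Matrix (Fin 2) (Fin 2) ℂ) = s • ((1 : ℂ) • 1 + (0 : ℂ) • Z) := by
    module
  rw [e0, sub_eq_add_neg, ← neg_smul,
    conj_Z_of_diag _ _ _ (by simp),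
    conj_Z_of_diag _ _ _ (by simp only [star_neg, star_mul', hI, rYY, rYX]; ring),
    conj_Z_of_diag _ _ _ (by simp only [star_mul', hI, rXX, rXY]; ring),
    conj_Z_of_diag _ _ _ (by simp only [star_mul', hI, rZX, rZY]; ring),
    ← add_smul, ← add_smul, ← add_smul]
  simp only [star_neg, star_one, star_zero, hs, hs']
  simp only [star_mul', hI, rXX, rXY, rYX, rYY, rZX, rZY]
  convert one_smul ℂ Z using 2
  linear_combination (s ^ 2 / 4) * (sX + sY) + 3 * h3
    - (s ^ 2 / 4) * (yx ^ 2 + xy ^ 2 + zy ^ 2) * Complex.I_sq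
end

section
/- Let U be a 2×2 complex unitary matrix and define B₀(U) = (1/√3) • 1, B₁(U) = (1/(2√3)) • (Tr(Uᴴ*Y*U*Y) • 1 − (I * Tr(Uᴴ*Y*U*X)) • Z), B₂(U) = (1/(2√3)) • (Tr(Uᴴ*X*U*X) • 1 + (I * Tr(Uᴴ*X*U*Y)) • Z), B₃(U) = (1/(2√3)) • ((I * Tr(Uᴴ*Z*U*Y)) • 1 + Tr(Uᴴ*Z*U*X) • Z). Then ∑_{k=0}^{3} (B_k(U))ᴴ * B_k(U) = 1. -/
/-!
Write `R a b = Tr(Uᴴ σ_a U σ_b)`. Since the `σ_a` are Hermitian, every `R a b` is real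
(`star_trace_pauli`), so the cross terms proportional to `Z` cancel in each `Bₖᴴ Bₖ`
(`kraus_mul_self`, `kraus_mul_self'`), leaving `(R² + R²) / 12` times the identity. It remains to see
that `R x b² + R y b² + R z b² = 4` for `b = x, y` (`sum_sq_trace`), which is the completeness relation
`∑ₐ Tr(σ_a M)² = 2 Tr(M²) - Tr(M)²` applied to the traceless involution `M = U σ_b Uᴴ`.
The total is `1/3 + (4 + 4)/12 = 1`.
-/

open Matrix

/-- Completeness of the Pauli matrices: `∑ₐ σ_a ⊗ σ_a = 2 SWAP - 1`, traced against `M ⊗ M`. -/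
lemma pauli_completeness (M : Matrix (Fin 2) (Fin 2) ℂ) :
    trace (X * M) ^ 2 + trace (Y * M) ^ 2 + trace (Z * M) ^ 2
      = 2 * trace (M * M) - trace M ^ 2 := by
  simp only [X, Y, Z, trace_fin_two, Matrix.mul_apply, Fin.sum_univ_two, of_apply, cons_val',
    cons_val_zero, cons_val_one, cons_val_fin_one]
  linear_combination (M 0 1 - M 1 0) ^ 2 * Complex.I_sq

/-- The column sum of squares of `R` is `4`, by completeness for the traceless involution `U b Uᴴ`. -/
lemma sum_sq_trace {U : Matrix (Fin 2) (Fin 2) ℂ} (hU : U * Uᴴ = 1)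
    {b : Matrix (Fin 2) (Fin 2) ℂ} (hb : b * b = 1) (hb0 : trace b = 0) :
    trace (Uᴴ * X * U * b) ^ 2 + trace (Uᴴ * Y * U * b) ^ 2 + trace (Uᴴ * Z * U * b) ^ 2 = 4 := by
  have hU' : Uᴴ * U = 1 := mul_eq_one_comm.mp hU
  have key : ∀ a, trace (Uᴴ * a * U * b) = trace (a * (U * b * Uᴴ)) := fun a => by
    rw [Matrix.mul_assoc, Matrix.mul_assoc, trace_mul_comm, Matrix.mul_assoc]
  have h0 : trace (U * b * Uᴴ) = 0 := by
    rw [trace_mul_comm, ← Matrix.mul_assoc, hU', Matrix.one_mul, hb0]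
  have h1 : U * b * Uᴴ * (U * b * Uᴴ) = 1 := by
    calc U * b * Uᴴ * (U * b * Uᴴ) = U * (b * (Uᴴ * U) * b) * Uᴴ := by
          simp only [Matrix.mul_assoc]
      _ = 1 := by rw [hU', Matrix.mul_one, hb, Matrix.mul_one, hU]
  rw [key, key, key, pauli_completeness, h0, h1, trace_one, Fintype.card_fin]
  norm_num

/-- Reality of `R a b`: conjugation reverses the product, and cyclicity of the trace restores it. -/
lemma star_trace_pauli (U : Matrix (Fin 2) (Fin 2) ℂ) {a b : Matrix (Fin 2) (Fin 2) ℂ}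
    (ha : aᴴ = a) (hb : bᴴ = b) :
    star (trace (Uᴴ * a * U * b)) = trace (Uᴴ * a * U * b) := by
  rw [← trace_conjTranspose]
  simp only [conjTranspose_mul, conjTranspose_conjTranspose, ha, hb]
  rw [trace_mul_comm]
  simp only [Matrix.mul_assoc]

lemma Z_conjTranspose : Zᴴ = Z := by
  ext i j; fin_cases i <;> fin_cases j <;> simp [Z]

lemma Z_mul_Z : Z * Z = 1 := by
  ext i j; fin_cases i <;> fin_cases j <;> simp [Z]

/-- For real `c, p, q` the `Z` terms cancel, because the coefficients of `1` and `Z` are out of phase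
by `I`. -/
lemma kraus_mul_self {c p q : ℂ} (hc : star c = c) (hp : star p = p) (hq : star q = q) :
    (c • (p • (1 : Matrix (Fin 2) (Fin 2) ℂ) + (Complex.I * q) • Z))ᴴ
      * (c • (p • (1 : Matrix (Fin 2) (Fin 2) ℂ) + (Complex.I * q) • Z))
      = (c ^ 2 * (p ^ 2 + q ^ 2)) • (1 : Matrix (Fin 2) (Fin 2) ℂ) := by
  have hI : star Complex.I = -Complex.I := Complex.conj_I
  simp only [conjTranspose_smul, conjTranspose_add, conjTranspose_one, Z_conjTranspose, star_mul',
    hc, hp, hq, hI, smul_mul_assoc, mul_smul_comm, add_mul, mul_add, Z_mul_Z, mul_one, one_mul]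
  match_scalars
  · linear_combination (-c ^ 2 * q ^ 2) * Complex.I_sq
  · ring

/-- The same cancellation with the factor `I` on the identity term. -/
lemma kraus_mul_self' {c p q : ℂ} (hc : star c = c) (hp : star p = p) (hq : star q = q) :
    (c • ((Complex.I * p) • (1 : Matrix (Fin 2) (Fin 2) ℂ) + q • Z))ᴴ
      * (c • ((Complex.I * p) • (1 : Matrix (Fin 2) (Fin 2) ℂ) + q • Z))
      = (c ^ 2 * (p ^ 2 + q ^ 2)) • (1 : Matrix (Fin 2) (Fin 2) ℂ) := by
  have hI : star Complex.I = -Complex.I := Complex.conj_I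
  simp only [conjTranspose_smul, conjTranspose_add, conjTranspose_one, Z_conjTranspose, star_mul',
    hc, hp, hq, hI, smul_mul_assoc, mul_smul_comm, add_mul, mul_add, Z_mul_Z, mul_one, one_mul]
  match_scalars
  · linear_combination (-c ^ 2 * p ^ 2) * Complex.I_sq
  · ring

/-- Trace-preservation condition: `∑ k, (B k)ᴴ * (B k) = 1`. -/
theorem kraus_trace_preserving (U : Matrix (Fin 2) (Fin 2) ℂ) (hU : U * Uᴴ = 1) :
    ∑ k : Fin 4, (B U k)ᴴ * (B U k) = 1 := by
  have hX : Xᴴ = X := by ext i j; fin_cases i <;> fin_cases j <;> simp [X]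
  have hY : Yᴴ = Y := by ext i j; fin_cases i <;> fin_cases j <;> simp [Y]
  have hx := sum_sq_trace hU (b := X)
    (by ext i j; fin_cases i <;> fin_cases j <;> simp [X]) (by simp [X, trace_fin_two])
  have hy := sum_sq_trace hU (b := Y)
    (by ext i j; fin_cases i <;> fin_cases j <;> simp [Y]) (by simp [Y, trace_fin_two])
  have hs : ((Real.sqrt 3 : ℝ) : ℂ) ^ 2 = 3 := by
    rw [← Complex.ofReal_pow, Real.sq_sqrt (by norm_num)]; norm_num
  have hc0 : star (1 / ((Real.sqrt 3 : ℝ) : ℂ)) = 1 / ((Real.sqrt 3 : ℝ) : ℂ) := by simp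
  have hc : star (1 / (2 * ((Real.sqrt 3 : ℝ) : ℂ))) = 1 / (2 * ((Real.sqrt 3 : ℝ) : ℂ)) := by simp
  have hc0' : (1 / ((Real.sqrt 3 : ℝ) : ℂ)) ^ 2 = 1 / 3 := by rw [div_pow, hs]; norm_num
  have hc' : (1 / (2 * ((Real.sqrt 3 : ℝ) : ℂ))) ^ 2 = 1 / 12 := by
    rw [div_pow, mul_pow, hs]; norm_num
  have e0 : (B U 0)ᴴ * B U 0 = (1 / 3 : ℂ) • (1 : Matrix (Fin 2) (Fin 2) ℂ) := by
    change ((1 / ((Real.sqrt 3 : ℝ) : ℂ)) • (1 : Matrix (Fin 2) (Fin 2) ℂ))ᴴ * (_ • 1) = _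
    rw [conjTranspose_smul, hc0, conjTranspose_one, smul_mul_smul_comm, mul_one, ← pow_two, hc0']
  have hyx := star_trace_pauli U hY hX
  have e1 := kraus_mul_self hc (star_trace_pauli U hY hY)
    (q := -trace (Uᴴ * Y * U * X)) (by rw [star_neg, hyx])
  rw [mul_neg, neg_smul, ← sub_eq_add_neg] at e1
  have e2 := kraus_mul_self hc (star_trace_pauli U hX hX) (star_trace_pauli U hX hY)
  have e3 := kraus_mul_self' hc (star_trace_pauli U Z_conjTranspose hY)
    (star_trace_pauli U Z_conjTranspose hX)
  rw [Fin.sum_univ_four, e0]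
  -- Each `B U k` unfolds definitionally to the shape in `e1`, `e2`, `e3`.
  refine (congrArg₂ (· + ·) (congrArg₂ (· + ·) (congrArg₂ (· + ·) rfl e1) e2) e3).trans ?_
  rw [hc', ← add_smul, ← add_smul, ← add_smul]
  convert one_smul ℂ (1 : Matrix (Fin 2) (Fin 2) ℂ) using 2
  linear_combination (1 / 12) * hx + (1 / 12) * hy
end

section
/- Let ι be a finite index type and A : ι → Matrix (Fin 2) (Fin 2) ℂ a family of 2×2 complex matrices satisfying ∑_k (A k)ᴴ * (A k) = 1 and ∑_k (A k)ᴴ * Z * (A k) = Z. Then every A k is diagonal: (A k) 0 1 = 0 and (A k) 1 0 = 0 for all k. -/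
/-!
Compare diagonal entries of the two hypotheses. In column `j` the first gives
`∑ₖ (|Aₖ 0 j|² + |Aₖ 1 j|²) = 1` and the second `∑ₖ (|Aₖ 0 j|² - |Aₖ 1 j|²) = ±1`, with sign `+` for
`j = 0` and `-` for `j = 1`. Subtracting for `j = 0` and adding for `j = 1` leaves
`∑ₖ |Aₖ 1 0|² = 0` and `∑ₖ |Aₖ 0 1|² = 0`, and a vanishing sum of squares has vanishing terms.
-/

open Matrix

theorem eq_zero_of_sum_normSq_eq_zero {ι : Type*} [Fintype ι] {f : ι → ℂ}
    (h : ∑ k, (starRingEnd ℂ) (f k) * f k = 0) (k : ι) : f k = 0 := by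
  have h' : ∑ k, Complex.normSq (f k) = 0 := by
    simp only [← Complex.normSq_eq_conj_mul_self] at h
    exact_mod_cast h
  rw [Finset.sum_eq_zero_iff_of_nonneg fun _ _ => Complex.normSq_nonneg _] at h'
  exact Complex.normSq_eq_zero.mp (h' k (Finset.mem_univ k))

/-- If a finite Kraus family `A` is trace preserving (`∑ Aₖᴴ Aₖ = 1`) and its dual map
fixes Pauli-Z (`∑ Aₖᴴ Z Aₖ = Z`), then every `Aₖ` is diagonal. -/
theorem kraus_family_diagonal {ι : Type*} [Fintype ι]
    (A : ι → Matrix (Fin 2) (Fin 2) ℂ)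
    (h1 : ∑ k, (A k)ᴴ * (A k) = 1)
    (h2 : ∑ k, (A k)ᴴ * Z * (A k) = Z) :
    ∀ k, A k 0 1 = 0 ∧ A k 1 0 = 0 := by
  have a0 := congrFun (congrFun h1 0) 0
  have a1 := congrFun (congrFun h1 1) 1
  have b0 := congrFun (congrFun h2 0) 0
  have b1 := congrFun (congrFun h2 1) 1
  simp [Matrix.sum_apply, Matrix.mul_apply, Fin.sum_univ_two, Z, Finset.sum_add_distrib]
    at a0 a1 b0 b1
  refine fun k => ⟨eq_zero_of_sum_normSq_eq_zero (f := fun k => A k 0 1) ?_ k,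
    eq_zero_of_sum_normSq_eq_zero (f := fun k => A k 1 0) ?_ k⟩
  · linear_combination (a1 + b1) / 2
  · linear_combination (a0 - b0) / 2
end

section
/- Let d be a positive natural number and O : Matrix (Fin d) (Fin d) ℂ a Hermitian matrix. For each μ ∈ ℂ let l(μ) denote the dimension (finrank over ℂ) of the eigenspace {v : Fin d → ℂ | O.mulVec v = μ • v}, and let S ⊆ ℂ be the (finite) set of eigenvalues of O (those μ with l(μ) > 0). Then the centralizer subgroup C_O = {U ∈ Matrix.unitaryGroup (Fin d) ℂ | (U : Matrix) * O = O * U} is isomorphic as a group (there exists a MulEquiv) to the direct product ∏_{μ ∈ S} Matrix.unitaryGroup (Fin (l μ)) ℂ. -/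
/-!
Writing `O` in an orthonormal eigenbasis grouped by eigenvalue gives a unitary `W`, from
`⨁_μ ℂ^{l(μ)}` to `ℂ^d`, with `O W = W D`, where `D` is the diagonal matrix equal to `μ` on the
`μ`-th block. Conjugation by `W` identifies the centralizer of `O` with the unitaries commuting
with `D`; since distinct blocks carry distinct values, these are exactly the block diagonal unitaries
(`eq_blockDiagonal'_of_commute`), i.e. the families of unitaries of the blocks
(`nonempty_mulEquiv_of_diagonalizes`).

The matrix `W` is the eigenvector matrix of the spectral theorem with its columns regrouped; the
regrouping exists because `l(μ)` is the number of indices `i` whose eigenvalue is `μ`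
(`eigDim_eq_card`), by rank-nullity applied to `O - μ`.
-/

open Matrix

/-- The eigenspace `{v | O.mulVec v = μ • v}` of a matrix `O`, as a submodule. -/
noncomputable def eigSp (d : ℕ) (O : Matrix (Fin d) (Fin d) ℂ) (μ : ℂ) :
    Submodule ℂ (Fin d → ℂ) where
  carrier := {v : Fin d → ℂ | O.mulVec v = μ • v}
  zero_mem' := by simp [Set.mem_setOf_eq, Matrix.mulVec_zero]
  add_mem' := by
    intro a b ha hb
    simp only [Set.mem_setOf_eq] at *
    rw [Matrix.mulVec_add, ha, hb, smul_add]
  smul_mem' := by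
    intro c v hv
    simp only [Set.mem_setOf_eq] at *
    rw [Matrix.mulVec_smul, hv, smul_comm]

/-- The dimension `l(μ)` of the eigenspace of `O` for eigenvalue `μ`. -/
noncomputable def eigDim (d : ℕ) (O : Matrix (Fin d) (Fin d) ℂ) (μ : ℂ) : ℕ :=
  Module.finrank ℂ (eigSp d O μ)

/-- The centralizer `C_O` of `O` in the unitary group, as a subgroup. -/
def centSubgroup (d : ℕ) (O : Matrix (Fin d) (Fin d) ℂ) :
    Subgroup (Matrix.unitaryGroup (Fin d) ℂ) where
  carrier := {U | (U : Matrix (Fin d) (Fin d) ℂ) * O = O * (U : Matrix (Fin d) (Fin d) ℂ)}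
  one_mem' := by simp [Set.mem_setOf_eq]
  mul_mem' := by
    intro a b ha hb
    simp only [Set.mem_setOf_eq] at *
    have hab : ((a * b : Matrix.unitaryGroup (Fin d) ℂ) : Matrix (Fin d) (Fin d) ℂ)
        = (a : Matrix (Fin d) (Fin d) ℂ) * (b : Matrix (Fin d) (Fin d) ℂ) := rfl
    rw [hab, mul_assoc, hb, ← mul_assoc, ha, mul_assoc]
  inv_mem' := by
    intro U hU
    simp only [Set.mem_setOf_eq] at *
    have h1 : ((U⁻¹ : Matrix.unitaryGroup (Fin d) ℂ) : Matrix (Fin d) (Fin d) ℂ) *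
        (U : Matrix (Fin d) (Fin d) ℂ) = 1 := by
      have := congrArg (fun W : Matrix.unitaryGroup (Fin d) ℂ =>
        (W : Matrix (Fin d) (Fin d) ℂ)) (inv_mul_cancel U)
      simpa using this
    have h2 : (U : Matrix (Fin d) (Fin d) ℂ) *
        ((U⁻¹ : Matrix.unitaryGroup (Fin d) ℂ) : Matrix (Fin d) (Fin d) ℂ) = 1 := by
      have := congrArg (fun W : Matrix.unitaryGroup (Fin d) ℂ =>
        (W : Matrix (Fin d) (Fin d) ℂ)) (mul_inv_cancel U)
      simpa using this
    calc ((U⁻¹ : Matrix.unitaryGroup (Fin d) ℂ) : Matrix (Fin d) (Fin d) ℂ) * O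
        = ↑U⁻¹ * O * 1 := (mul_one _).symm
      _ = ↑U⁻¹ * O * (↑U * ↑U⁻¹) := by rw [h2]
      _ = ↑U⁻¹ * (O * ↑U) * ↑U⁻¹ := by simp only [mul_assoc]
      _ = ↑U⁻¹ * (↑U * O) * ↑U⁻¹ := by rw [hU]
      _ = (↑U⁻¹ * ↑U) * (O * ↑U⁻¹) := by simp only [mul_assoc]
      _ = O * ↑U⁻¹ := by rw [h1, one_mul]

/-- A matrix commuting with a diagonal matrix that is constant on blocks, with distinct values on
distinct blocks, is block diagonal: the `(x, y)` entry of the commutation relation reads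
`A x y * c y = c x * A x y`. -/
lemma eq_blockDiagonal'_of_commute {o : Type*} [Fintype o] [DecidableEq o] {n : o → ℕ}
    {c : o → ℂ} (hc : Function.Injective c)
    (A : Matrix (Σ k, Fin (n k)) (Σ k, Fin (n k)) ℂ)
    (h : A * diagonal (fun x => c x.1) = diagonal (fun x => c x.1) * A) :
    blockDiagonal' (blockDiag' A) = A := by
  ext ⟨k, i⟩ ⟨l, j⟩
  by_cases hkl : k = l
  · subst hkl
    rw [blockDiagonal'_apply_eq, blockDiag'_apply]
  · rw [blockDiagonal'_apply_ne _ _ _ hkl]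
    have h1 := congrFun (congrFun h ⟨k, i⟩) ⟨l, j⟩
    rw [mul_diagonal, diagonal_mul] at h1
    have h2 : (c l - c k) * A ⟨k, i⟩ ⟨l, j⟩ = 0 := by linear_combination h1
    rcases mul_eq_zero.mp h2 with h3 | h3
    · exact absurd (hc (sub_eq_zero.mp h3)).symm hkl
    · exact h3.symm

lemma blockDiagonal'_mul_diagonal_comm {o : Type*} [Fintype o] [DecidableEq o] {n : o → ℕ}
    (c : o → ℂ) (M : ∀ k, Matrix (Fin (n k)) (Fin (n k)) ℂ) :
    blockDiagonal' M * diagonal (fun x => c x.1)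
      = diagonal (fun x => c x.1) * blockDiagonal' M := by
  ext ⟨k, i⟩ ⟨l, j⟩
  rw [mul_diagonal, diagonal_mul]
  by_cases hkl : k = l
  · subst hkl
    exact mul_comm _ _
  · rw [blockDiagonal'_apply_ne _ _ _ hkl]
    simp

/-- If a unitary `W` (given with row and column indices of different types) diagonalizes `O` with
eigenvalues grouped into blocks, then `M ↦ W (⨁ M_k) Wᴴ` is an isomorphism from the product of the
unitary groups of the blocks onto the centralizer of `O`. -/
lemma nonempty_mulEquiv_of_diagonalizes {d : ℕ} {O : Matrix (Fin d) (Fin d) ℂ}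
    {o : Type*} [Fintype o] [DecidableEq o] {n : o → ℕ}
    {c : o → ℂ} (hc : Function.Injective c) (W : Matrix (Fin d) (Σ k, Fin (n k)) ℂ)
    (h1 : Wᴴ * W = 1) (h2 : W * Wᴴ = 1)
    (hO : O = W * diagonal (fun x : Σ k, Fin (n k) => c x.1) * Wᴴ) :
    Nonempty (centSubgroup d O ≃* ∀ k, Matrix.unitaryGroup (Fin (n k)) ℂ) := by
  have cancel : ∀ A B : Matrix (Σ k, Fin (n k)) (Σ k, Fin (n k)) ℂ,
      (W * A * Wᴴ) * (W * B * Wᴴ) = W * (A * B) * Wᴴ := by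
    intro A B
    calc (W * A * Wᴴ) * (W * B * Wᴴ) = W * A * (Wᴴ * W) * B * Wᴴ := by
          simp only [Matrix.mul_assoc]
      _ = W * (A * B) * Wᴴ := by rw [h1, Matrix.mul_one]; simp only [Matrix.mul_assoc]
  have conj_inj : ∀ A B : Matrix (Σ k, Fin (n k)) (Σ k, Fin (n k)) ℂ,
      W * A * Wᴴ = W * B * Wᴴ → A = B := by
    intro A B h
    have key : ∀ X : Matrix (Σ k, Fin (n k)) (Σ k, Fin (n k)) ℂ,
        Wᴴ * (W * X * Wᴴ) * W = X := by
      intro X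
      calc Wᴴ * (W * X * Wᴴ) * W = (Wᴴ * W) * X * (Wᴴ * W) := by simp only [Matrix.mul_assoc]
        _ = X := by rw [h1, Matrix.mul_one, Matrix.one_mul]
    rw [← key A, h, key B]
  have conj_surj : ∀ U : Matrix (Fin d) (Fin d) ℂ, W * (Wᴴ * U * W) * Wᴴ = U := by
    intro U
    calc W * (Wᴴ * U * W) * Wᴴ = (W * Wᴴ) * U * (W * Wᴴ) := by simp only [Matrix.mul_assoc]
      _ = U := by rw [h2, Matrix.mul_one, Matrix.one_mul]
  have conj_star : ∀ A : Matrix (Σ k, Fin (n k)) (Σ k, Fin (n k)) ℂ,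
      (W * A * Wᴴ)ᴴ = W * Aᴴ * Wᴴ := by
    intro A
    simp only [conjTranspose_mul, conjTranspose_conjTranspose, Matrix.mul_assoc]
  let bd : (∀ k, Matrix.unitaryGroup (Fin (n k)) ℂ) →
      Matrix (Σ k, Fin (n k)) (Σ k, Fin (n k)) ℂ := fun M => blockDiagonal' (fun k => (M k).1)
  have bd_one : bd 1 = 1 := blockDiagonal'_one
  have bd_mul : ∀ M N, bd (M * N) = bd M * bd N := fun M N =>
    blockDiagonal'_mul (fun k => (M k).1) (fun k => (N k).1)
  have bd_star : ∀ M, (bd M)ᴴ = bd M⁻¹ := fun M =>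
    blockDiagonal'_conjTranspose (fun k => (M k).1)
  have unit_mem : ∀ M, W * bd M * Wᴴ ∈ Matrix.unitaryGroup (Fin d) ℂ := by
    intro M
    rw [mem_unitaryGroup_iff, star_eq_conjTranspose, conj_star, cancel, bd_star, ← bd_mul,
      mul_inv_cancel, bd_one, Matrix.mul_one, h2]
  have cent_mem : ∀ M, (⟨W * bd M * Wᴴ, unit_mem M⟩ : Matrix.unitaryGroup (Fin d) ℂ)
      ∈ centSubgroup d O := by
    intro M
    change W * bd M * Wᴴ * O = O * (W * bd M * Wᴴ)
    rw [hO, cancel, cancel, blockDiagonal'_mul_diagonal_comm]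
  let F : (∀ k, Matrix.unitaryGroup (Fin (n k)) ℂ) →* centSubgroup d O :=
    { toFun := fun M => ⟨⟨W * bd M * Wᴴ, unit_mem M⟩, cent_mem M⟩
      map_one' := by
        apply Subtype.ext
        apply Subtype.ext
        change W * bd 1 * Wᴴ = 1
        rw [bd_one, Matrix.mul_one, h2]
      map_mul' := by
        intro M N
        apply Subtype.ext
        apply Subtype.ext
        change W * bd (M * N) * Wᴴ = (W * bd M * Wᴴ) * (W * bd N * Wᴴ)
        rw [cancel, bd_mul] }
  refine ⟨(MulEquiv.ofBijective F ⟨?_, ?_⟩).symm⟩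
  · intro M N h
    have h3 : W * bd M * Wᴴ = W * bd N * Wᴴ := congrArg (fun U : centSubgroup d O => U.1.1) h
    have h4 := blockDiagonal'_injective (conj_inj _ _ h3)
    funext k
    exact Subtype.ext (congrFun h4 k)
  · rintro ⟨⟨U, hU⟩, hUO⟩
    change U * O = O * U at hUO
    set A := Wᴴ * U * W with hA
    have hWA : W * A * Wᴴ = U := conj_surj U
    have hAblock : blockDiagonal' (blockDiag' A) = A := by
      apply eq_blockDiagonal'_of_commute hc
      apply conj_inj
      rw [← cancel, ← cancel, hWA, ← hO, hUO]
    have hAunit : A * Aᴴ = 1 := by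
      apply conj_inj
      rw [← cancel, ← conj_star, hWA, Matrix.mul_one, h2]
      exact mem_unitaryGroup_iff.mp hU
    have hblocks : (fun k => blockDiag' A k * (blockDiag' A k)ᴴ) = 1 := by
      apply blockDiagonal'_injective
      rw [blockDiagonal'_mul, ← blockDiagonal'_conjTranspose, hAblock, hAunit,
        blockDiagonal'_one]
    refine ⟨fun k => ⟨blockDiag' A k, mem_unitaryGroup_iff.mpr (congrFun hblocks k)⟩, ?_⟩
    apply Subtype.ext
    apply Subtype.ext
    change W * blockDiagonal' (blockDiag' A) * Wᴴ = U
    rw [hAblock, hWA]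

lemma eq_eigenvectorUnitary_mul_diagonal_mul {d : ℕ} {O : Matrix (Fin d) (Fin d) ℂ}
    (hO : O.IsHermitian) :
    O = (hO.eigenvectorUnitary : Matrix (Fin d) (Fin d) ℂ)
      * diagonal (fun i => (hO.eigenvalues i : ℂ))
      * (hO.eigenvectorUnitary : Matrix (Fin d) (Fin d) ℂ)ᴴ := by
  have h := hO.spectral_theorem
  rw [Unitary.conjStarAlgAut_apply] at h
  exact h

/-- It suffices to regroup the indices `i` of an orthonormal eigenbasis into blocks, one for each
eigenvalue; the columns of the eigenvector matrix are permuted accordingly. -/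
lemma nonempty_mulEquiv_of_equiv {d : ℕ} {O : Matrix (Fin d) (Fin d) ℂ} (hO : O.IsHermitian)
    {o : Type*} [Fintype o] [DecidableEq o] {n : o → ℕ}
    {c : o → ℂ} (hc : Function.Injective c) (e : (Σ k, Fin (n k)) ≃ Fin d)
    (he : ∀ x, (hO.eigenvalues (e x) : ℂ) = c x.1) :
    Nonempty (centSubgroup d O ≃* ∀ k, Matrix.unitaryGroup (Fin (n k)) ℂ) := by
  set V : Matrix (Fin d) (Fin d) ℂ := hO.eigenvectorUnitary.1 with hV
  refine nonempty_mulEquiv_of_diagonalizes hc (V.submatrix id e) ?_ ?_ ?_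
  · rw [conjTranspose_submatrix, ← submatrix_mul _ _ _ _ _ Function.bijective_id]
    have : Vᴴ * V = 1 := mem_unitaryGroup_iff'.mp hO.eigenvectorUnitary.2
    rw [this, submatrix_one_equiv]
  · rw [conjTranspose_submatrix, submatrix_mul_equiv]
    have : V * Vᴴ = 1 := mem_unitaryGroup_iff.mp hO.eigenvectorUnitary.2
    rw [this, submatrix_id_id]
  · have hD : diagonal (fun x : Σ k, Fin (n k) => c x.1)
        = (diagonal (fun i => (hO.eigenvalues i : ℂ))).submatrix e e := by
      rw [submatrix_diagonal_equiv]
      congr 1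
      funext x
      exact (he x).symm
    rw [hD, conjTranspose_submatrix, submatrix_mul_equiv, submatrix_mul_equiv, submatrix_id_id]
    exact eq_eigenvectorUnitary_mul_diagonal_mul hO

/-- The geometric multiplicity of `μ` is the number of indices with eigenvalue `μ`: the matrix
`O - μ` is unitarily equivalent to a diagonal matrix whose rank is the number of the other
indices. -/
lemma eigDim_eq_card {d : ℕ} {O : Matrix (Fin d) (Fin d) ℂ} (hO : O.IsHermitian) (μ : ℂ) :
    eigDim d O μ = Fintype.card {i // (hO.eigenvalues i : ℂ) = μ} := by
  set V : Matrix (Fin d) (Fin d) ℂ := hO.eigenvectorUnitary.1 with hV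
  have hV2 : V * Vᴴ = 1 := mem_unitaryGroup_iff.mp hO.eigenvectorUnitary.2
  have hsp : O - μ • (1 : Matrix (Fin d) (Fin d) ℂ)
      = V * diagonal (fun i => (hO.eigenvalues i : ℂ) - μ) * Vᴴ := by
    have h1 : diagonal (fun i => (hO.eigenvalues i : ℂ) - μ)
        = diagonal (fun i => (hO.eigenvalues i : ℂ)) - μ • (1 : Matrix (Fin d) (Fin d) ℂ) := by
      rw [smul_one_eq_diagonal, diagonal_sub]
    rw [h1, Matrix.mul_sub, Matrix.sub_mul, ← eq_eigenvectorUnitary_mul_diagonal_mul hO,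
      Matrix.mul_smul, Matrix.mul_one, Matrix.smul_mul, hV2]
  have hVdet : IsUnit V.det := isUnit_det_of_right_inverse hV2
  have hVdet' : IsUnit Vᴴ.det := isUnit_det_of_left_inverse hV2
  have hrank : (O - μ • (1 : Matrix (Fin d) (Fin d) ℂ)).rank
      = Fintype.card {i // (hO.eigenvalues i : ℂ) - μ ≠ 0} := by
    rw [hsp, rank_mul_eq_left_of_isUnit_det _ _ hVdet', rank_mul_eq_right_of_isUnit_det _ _ hVdet,
      rank_diagonal]
  have hker : eigSp d O μ = LinearMap.ker (O - μ • (1 : Matrix (Fin d) (Fin d) ℂ)).mulVecLin := by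
    ext v
    rw [LinearMap.mem_ker, mulVecLin_apply, sub_mulVec, smul_mulVec, one_mulVec, sub_eq_zero]
    rfl
  have hrn := LinearMap.finrank_range_add_finrank_ker
    (O - μ • (1 : Matrix (Fin d) (Fin d) ℂ)).mulVecLin
  rw [← hker] at hrn
  change Matrix.rank _ + eigDim d O μ = _ at hrn
  rw [hrank, Module.finrank_fin_fun] at hrn
  have hc := Fintype.card_subtype_compl (fun i => (hO.eigenvalues i : ℂ) = μ)
  have hle := Fintype.card_subtype_le (fun i => (hO.eigenvalues i : ℂ) = μ)
  have he : Fintype.card {i // (hO.eigenvalues i : ℂ) - μ ≠ 0}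
      = Fintype.card {i // ¬ (hO.eigenvalues i : ℂ) = μ} :=
    Fintype.card_congr (Equiv.subtypeEquivRight fun i => by rw [ne_eq, sub_eq_zero])
  rw [Fintype.card_fin] at hc hle
  omega

/-- A map whose fibres have `n k` elements enumerates a disjoint union of the `Fin (n k)`. -/
lemma exists_equiv_sigma_fin {α o : Type*} [Finite α] (f : α → o) (n : o → ℕ)
    (h : ∀ k, Nat.card {i // f i = k} = n k) :
    ∃ e : (Σ k, Fin (n k)) ≃ α, ∀ x, f (e x) = x.1 :=
  ⟨(Equiv.sigmaCongrRight fun k => (Finite.equivFinOfCardEq (h k)).symm).trans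
    (Equiv.sigmaFiberEquiv f), fun x => ((Finite.equivFinOfCardEq (h x.1)).symm x.2).2⟩

/-- Structure of the centralizer of a Hermitian matrix `O` in the unitary group:
`C_O` is isomorphic, as a group, to the direct product of the unitary groups of its
eigenspaces, `C_O ≅ ∏_{μ ∈ S} U(l(μ))`, where `S` is the set of eigenvalues of `O`
(those `μ` with `l(μ) > 0`). -/
theorem centralizer_iso_prod_unitaryGroups (d : ℕ) (hd : 0 < d)
    (O : Matrix (Fin d) (Fin d) ℂ) (hO : Oᴴ = O) :
    Nonempty ((centSubgroup d O) ≃*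
      ∀ μ : {μ : ℂ // 0 < eigDim d O μ}, Matrix.unitaryGroup (Fin (eigDim d O μ.1)) ℂ) := by
  classical
  have hH : O.IsHermitian := hO
  have hpos : ∀ i, 0 < eigDim d O (hH.eigenvalues i : ℂ) := fun i => by
    rw [eigDim_eq_card hH, Fintype.card_pos_iff]
    exact ⟨⟨i, rfl⟩⟩
  let f : Fin d → {μ : ℂ // 0 < eigDim d O μ} := fun i => ⟨hH.eigenvalues i, hpos i⟩
  have hf : Function.Surjective f := by
    rintro ⟨μ, hμ⟩
    have hμ' := hμ
    rw [eigDim_eq_card hH, Fintype.card_pos_iff] at hμ'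
    obtain ⟨i, hi⟩ := hμ'
    exact ⟨i, Subtype.ext hi⟩
  have : Finite {μ : ℂ // 0 < eigDim d O μ} := Finite.of_surjective f hf
  let _ : Fintype {μ : ℂ // 0 < eigDim d O μ} := Fintype.ofFinite _
  have hcard : ∀ μ : {μ : ℂ // 0 < eigDim d O μ},
      Nat.card {i // f i = μ} = eigDim d O μ.1 := fun μ => by
    rw [eigDim_eq_card hH, ← Nat.card_eq_fintype_card]
    exact Nat.card_congr (Equiv.subtypeEquivRight fun i => Subtype.ext_iff)
  obtain ⟨e, he⟩ := exists_equiv_sigma_fin f (fun μ => eigDim d O μ.1) hcard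
  have h := nonempty_mulEquiv_of_equiv (o := {μ : ℂ // 0 < eigDim d O μ})
    (n := fun μ => eigDim d O μ.1) (c := Subtype.val) hH Subtype.val_injective e
    fun x => congrArg Subtype.val (he x)
  exact h
end
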